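/- arXiv:2104.10165 — 2 statements merged into one kernel-verified Lean document; each statement's English description precedes it below -/
import Mathlib

section
/- The center of the group G consists exactly of the two elements 1 and -1 (the identity matrix and its negative), and the quotient of G by its center is isomorphic to the symmetric group on 4 letters. -/
open Matrix Complex
open scoped MatrixGroups

noncomputable section

def iM : Matrix (Fin 2) (Fin 2) ℂ := !![0, 1; -1, 0]
def jM : Matrix (Fin 2) (Fin 2) ℂ := !![0, Complex.I; Complex.I, 0]
def kM : Matrix (Fin 2) (Fin 2) ℂ := !![Complex.I, 0; 0, -Complex.I]
def wM : Matrix (Fin 2) (Fin 2) ℂ :=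
  (1 / 2 : ℂ) • !![-1 + Complex.I, 1 + Complex.I; -1 + Complex.I, -1 - Complex.I]
def cM : Matrix (Fin 2) (Fin 2) ℂ :=
  ((Real.sqrt 2 : ℂ))⁻¹ • !![-Complex.I, Complex.I; Complex.I, Complex.I]
def dM : Matrix (Fin 2) (Fin 2) ℂ :=
  ((Real.sqrt 2 : ℂ))⁻¹ • !![-1, 1; 1, 1]

def G : Subgroup (GL (Fin 2) ℂ) :=
  Subgroup.closure {g : GL (Fin 2) ℂ |
    (g : Matrix (Fin 2) (Fin 2) ℂ) = iM ∨
    (g : Matrix (Fin 2) (Fin 2) ℂ) = wM ∨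
    (g : Matrix (Fin 2) (Fin 2) ℂ) = dM}

/-
Conjugation by `iM`, `wM` and `dM` permutes the quaternion axes `iM`, `jM`, `kM` up to sign, hence
permutes the four diagonals `± iM ± jM ± kM` of the cube up to sign. This gives a homomorphism from
`G` onto the symmetric group on four letters.

Suppose that a matrix fixes all four diagonals up to sign. Oriented to sum to zero, the diagonals
satisfy no other linear relation, so the four signs agree; as `kM = iM * jM`, the common sign is
`1`, and the matrix commutes with all quaternions, so it is scalar. The determinant on `G` is the
sign of the permutation, which forces the scalar to be `1` or `-1`. The symmetric group has trivial
center, so the center of `G` lies in this kernel, and `1` and `-1` are central.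
-/

section Group

variable {K Q : Type*} [Group K] [Group Q]

theorem exists_monoidHom_of_le_map_fst {J : Subgroup (K × Q)} (hJ : ∀ q, ((1 : K), q) ∈ J → q = 1)
    {H : Subgroup K} (hH : H ≤ J.map (MonoidHom.fst K Q)) :
    ∃ φ : H →* Q, ∀ h : H, ((h : K), φ h) ∈ J := by
  have exists_mem (h : H) : ∃ q, ((h : K), q) ∈ J := by
    obtain ⟨⟨_, q⟩, hq, rfl⟩ := hH h.2
    exact ⟨q, hq⟩
  choose φ hφ using exists_mem
  refine ⟨MonoidHom.mk' φ fun g h ↦ ?_, hφ⟩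
  refine eq_of_mul_inv_eq_one (hJ _ ?_)
  simpa using J.mul_mem (hφ (g * h)) (J.inv_mem (J.mul_mem (hφ g) (hφ h)))

theorem center_le_ker_of_surjective {φ : K →* Q} (hφ : Function.Surjective φ)
    (hQ : Subgroup.center Q = ⊥) : Subgroup.center K ≤ φ.ker := by
  intro z hz
  rw [MonoidHom.mem_ker, ← Subgroup.mem_bot, ← hQ, Subgroup.mem_center_iff]
  refine hφ.forall.2 fun g ↦ ?_
  rw [← map_mul, ← map_mul, Subgroup.mem_center_iff.1 hz g]

theorem center_perm_eq_bot {α : Type*} (hα : 3 ≤ Cardinal.mk α) :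
    Subgroup.center (Equiv.Perm α) = ⊥ := by
  classical
  refine (Subgroup.eq_bot_iff_forall _).2 fun σ hσ ↦ Equiv.ext fun a ↦ ?_
  by_contra! hne : σ a ≠ a
  obtain ⟨c, hca, hcσ⟩ := Cardinal.exists_ne_ne_of_three_le hα a (σ a)
  have hcomm := Equiv.congr_fun (Subgroup.mem_center_iff.1 hσ (Equiv.swap (σ a) c)) a
  rw [Equiv.Perm.mul_apply, Equiv.Perm.mul_apply, Equiv.swap_apply_left,
    Equiv.swap_apply_of_ne_of_ne (Ne.symm hne) hca.symm] at hcomm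
  exact hcσ hcomm

theorem closure_finRotate_swap_zero_one (n : ℕ) :
    Subgroup.closure {finRotate (n + 2), Equiv.swap 0 1} = ⊤ := by
  simpa using Equiv.Perm.closure_cycle_adjacent_swap isCycle_finRotate support_finRotate
    (0 : Fin (n + 2))

end Group

section SignedPerm

variable {ι R : Type*} [Ring R]

/-- The pairs `(g, σ)` of a unit and a permutation of the index set such that conjugation by `g`
sends `v a` to `v (σ a)` or its negative for every `a`. This is the graph of the permutation action
on the lines spanned by the `v a`, before it is known that `g` determines `σ`. -/
def signedPermPairs (v : ι → R) : Subgroup (Rˣ × Equiv.Perm ι) where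
  carrier := {p | ∀ a, ∃ ε : ℤˣ, SemiconjBy (p.1 : R) (v a) (ε • v (p.2 a))}
  one_mem' a := ⟨1, by simp⟩
  mul_mem' {p q} hp hq a := by
    obtain ⟨δ, hδ⟩ := hq a
    obtain ⟨ε, hε⟩ := hp (q.2 a)
    refine ⟨δ * ε, ?_⟩
    simpa [mul_smul] using (hε.smul_right δ).mul_left hδ
  inv_mem' {p} hp a := by
    obtain ⟨ε, hε⟩ := hp (p.2⁻¹ a)
    refine ⟨ε⁻¹, ?_⟩
    simpa [smul_smul] using hε.units_inv_symm_left.smul_right ε⁻¹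

theorem mk_mem_signedPermPairs {v : ι → R} {g : Rˣ} {σ : Equiv.Perm ι} :
    (g, σ) ∈ signedPermPairs v ↔ ∀ a, ∃ ε : ℤˣ, SemiconjBy (g : R) (v a) (ε • v (σ a)) :=
  Iff.rfl

end SignedPerm

section CubeDiagonals

/-- The four diagonals of the cube with axes `x`, `y`, `z`, one vector from each opposite pair. The
signs are chosen so that the diagonals sum to zero, and the order so that a cyclic rotation of the
axes induces the cycle `1 ↦ 2 ↦ 3 ↦ 1`. -/
def cubeDiagonals {A : Type*} [AddCommGroup A] (x y z : A) : Fin 4 → A :=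
  ![x + y + z, x - y - z, -x - y + z, -x + y - z]

variable {A : Type*} [AddCommGroup A] (x y z : A)

theorem sum_cubeDiagonals : ∑ a, cubeDiagonals x y z a = 0 := by
  simp only [cubeDiagonals, Fin.sum_univ_four, cons_val]
  abel

theorem cubeDiagonals_neg_neg (a : Fin 4) :
    cubeDiagonals x (-y) (-z) a =
      cubeDiagonals x y z ((Equiv.swap 0 1 * Equiv.swap 2 3 : Equiv.Perm (Fin 4)) a) := by
  fin_cases a <;> simp [cubeDiagonals, Equiv.swap_apply_def] <;> abel

theorem cubeDiagonals_rotate (a : Fin 4) :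
    cubeDiagonals z x y a =
      cubeDiagonals x y z ((Equiv.swap 1 2 * Equiv.swap 2 3 : Equiv.Perm (Fin 4)) a) := by
  fin_cases a <;> simp [cubeDiagonals, Equiv.swap_apply_def] <;> abel

theorem cubeDiagonals_neg_swap (a : Fin 4) :
    cubeDiagonals (-x) (-z) (-y) a = -cubeDiagonals x y z (Equiv.swap 2 3 a) := by
  fin_cases a <;> simp [cubeDiagonals, Equiv.swap_apply_def] <;> abel

variable {R : Type*} [Ring R] {g x y z x' y' z' : R}

theorem semiconjBy_cubeDiagonals (hx : SemiconjBy g x x') (hy : SemiconjBy g y y')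
    (hz : SemiconjBy g z z') (a : Fin 4) :
    SemiconjBy g (cubeDiagonals x y z a) (cubeDiagonals x' y' z' a) := by
  fin_cases a
  · exact (hx.add_right hy).add_right hz
  · exact (hx.sub_right hy).sub_right hz
  · exact (hx.neg_right.sub_right hy).add_right hz
  · exact (hx.neg_right.add_right hy).sub_right hz

theorem semiconjBy_axes_of_semiconjBy_cubeDiagonals [IsAddTorsionFree R] {ε : ℤˣ}
    (h : ∀ a, SemiconjBy g (cubeDiagonals x y z a) (ε • cubeDiagonals x y z a)) :
    SemiconjBy g x (ε • x) ∧ SemiconjBy g y (ε • y) ∧ SemiconjBy g z (ε • z) := by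
  have of_two_nsmul {u : R} {a : Fin 4}
      (hu : cubeDiagonals x y z 0 + cubeDiagonals x y z a = 2 • u) : SemiconjBy g u (ε • u) := by
    have two_nsmul_u : SemiconjBy g (2 • u) (ε • 2 • u) := by
      simpa only [← hu, smul_add] using (h 0).add_right (h a)
    refine nsmul_right_injective two_ne_zero ?_
    simpa only [mul_smul_comm, smul_mul_assoc, smul_comm ε] using two_nsmul_u.eq
  refine ⟨of_two_nsmul (a := 1) ?_, of_two_nsmul (a := 3) ?_, of_two_nsmul (a := 2) ?_⟩ <;>
    simp only [cubeDiagonals, cons_val] <;> abel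

end CubeDiagonals

section QuaternionMatrices

theorem iM_mul_jM : iM * jM = kM := by
  simp [iM, jM, kM]

theorem semiconjBy_iM_jM : SemiconjBy iM jM (-jM) := by
  simp [SemiconjBy, iM, jM]

theorem semiconjBy_iM_kM : SemiconjBy iM kM (-kM) := by
  simp [SemiconjBy, iM, kM]

theorem semiconjBy_wM_iM : SemiconjBy wM iM kM := by
  refine SemiconjBy.smul_left ?_ _
  rw [SemiconjBy, iM, kM, mul_fin_two, mul_fin_two]
  grind [I_sq]

theorem semiconjBy_wM_jM : SemiconjBy wM jM iM := by
  refine SemiconjBy.smul_left ?_ _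
  rw [SemiconjBy, iM, jM, mul_fin_two, mul_fin_two]
  grind [I_sq]

theorem semiconjBy_wM_kM : SemiconjBy wM kM jM := by
  refine SemiconjBy.smul_left ?_ _
  rw [SemiconjBy, jM, kM, mul_fin_two, mul_fin_two]
  grind [I_sq]

theorem semiconjBy_dM_iM : SemiconjBy dM iM (-iM) := by
  simp [SemiconjBy, dM, iM]

theorem semiconjBy_dM_jM : SemiconjBy dM jM (-kM) := by
  simp [SemiconjBy, dM, jM, kM, mul_comm]

theorem semiconjBy_dM_kM : SemiconjBy dM kM (-jM) := by
  simp [SemiconjBy, dM, jM, kM, mul_comm]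

theorem det_iM : iM.det = 1 := by
  simp [iM]

theorem det_wM : wM.det = 1 := by
  rw [wM, det_smul, det_fin_two_of, Fintype.card_fin]
  linear_combination (-1 / 2 : ℂ) * I_mul_I

theorem det_dM : dM.det = -1 := by
  have sq_sqrt_two : (Real.sqrt 2 : ℂ) ^ 2 = 2 := by
    exact_mod_cast Real.sq_sqrt zero_le_two
  rw [dM, det_smul, det_fin_two_of, Fintype.card_fin, inv_pow, sq_sqrt_two]
  norm_num

theorem exists_eq_smul_one_of_commute {M : Matrix (Fin 2) (Fin 2) ℂ} (hi : Commute M iM)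
    (hk : Commute M kM) : ∃ c : ℂ, M = c • 1 := by
  have hi₀₀ : -M 0 1 = M 1 0 := by simpa [iM, mul_apply] using congrFun₂ hi.eq 0 0
  have hi₀₁ : M 0 0 = M 1 1 := by simpa [iM, mul_apply] using congrFun₂ hi.eq 0 1
  have hk₀₁ : -(M 0 1 * I) = I * M 0 1 := by
    simpa [kM, mul_apply] using congrFun₂ hk.eq 0 1
  have h₀₁ : M 0 1 = 0 := by
    linear_combination (I / 2) * hk₀₁ + M 0 1 * I_sq
  refine ⟨M 0 0, ?_⟩
  ext a b
  fin_cases a <;> fin_cases b <;> simp [h₀₁, ← hi₀₀, hi₀₁]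

end QuaternionMatrices

section Diagonals

/-- The diagonals of the cube whose axes are the quaternion units `iM`, `jM`, `kM`. -/
abbrev diagonals : Fin 4 → Matrix (Fin 2) (Fin 2) ℂ :=
  cubeDiagonals iM jM kM

theorem trace_diagonals_mul_diagonals (a b : Fin 4) :
    trace (diagonals a * diagonals b) = if a = b then -6 else 2 := by
  fin_cases a <;> fin_cases b <;>
    simp [diagonals, cubeDiagonals, iM, jM, kM, trace_fin_two] <;> grind [I_sq]

theorem eq_of_diagonals_eq_smul {a b : Fin 4} {ε : ℤˣ} (h : diagonals a = ε • diagonals b) :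
    a = b := by
  by_contra hab
  have gram := congrArg (fun M ↦ trace (M * diagonals b)) h
  simp only [smul_mul_assoc, trace_smul, trace_diagonals_mul_diagonals, if_neg hab, if_pos] at gram
  obtain rfl | rfl := Int.units_eq_one_or ε <;> norm_num [Units.smul_def] at gram

theorem coeff_eq_of_sum_smul_diagonals_eq_zero {c : Fin 4 → ℂ}
    (h : ∑ a, c a • diagonals a = 0) (a b : Fin 4) : c a = c b := by
  have four_mul_coeff (b : Fin 4) : 4 * c b = ∑ a, c a := by
    have gram := congrArg (fun M ↦ trace (M * diagonals b)) h
    have weights (a : Fin 4) : c a * (if a = b then -6 else 2) =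
        2 * c a - if a = b then 8 * c a else 0 := by
      split_ifs <;> ring
    simp only [Finset.sum_mul, trace_sum, smul_mul_assoc, trace_smul, smul_eq_mul,
      trace_diagonals_mul_diagonals, zero_mul, trace_zero, weights, Finset.sum_sub_distrib,
      ← Finset.mul_sum, Finset.sum_ite_eq', Finset.mem_univ, if_true] at gram
    linear_combination (-1 / 2 : ℂ) * gram
  linear_combination (1 / 4 : ℂ) * (four_mul_coeff a - four_mul_coeff b)

theorem exists_sign_of_mem_signedPermPairs {g : GL (Fin 2) ℂ}
    (hg : (g, 1) ∈ signedPermPairs diagonals) :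
    ∃ ε : ℤˣ, ∀ a, SemiconjBy (g : Matrix (Fin 2) (Fin 2) ℂ) (diagonals a) (ε • diagonals a) := by
  choose ε hε using mk_mem_signedPermPairs.1 hg
  have signed_sum : ∑ a, ((ε a : ℤ) : ℂ) • diagonals a = 0 := by
    refine g.isUnit.mul_left_eq_zero.1 ?_
    calc (∑ a, ((ε a : ℤ) : ℂ) • diagonals a) * (g : Matrix (Fin 2) (Fin 2) ℂ)
        = ∑ a, (g : Matrix (Fin 2) (Fin 2) ℂ) * diagonals a := by
          simp only [Finset.sum_mul, (hε _).eq, Equiv.Perm.one_apply, Units.smul_def,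
            Int.cast_smul_eq_zsmul]
      _ = 0 := by rw [← Finset.mul_sum, sum_cubeDiagonals, mul_zero]
  have ε_eq (a : Fin 4) : ε a = ε 0 :=
    Units.ext (Int.cast_injective (coeff_eq_of_sum_smul_diagonals_eq_zero signed_sum a 0))
  exact ⟨ε 0, fun a ↦ ε_eq a ▸ hε a⟩

theorem exists_eq_smul_one_of_mem_signedPermPairs {g : GL (Fin 2) ℂ}
    (hg : (g, 1) ∈ signedPermPairs diagonals) :
    ∃ c : ℂ, (g : Matrix (Fin 2) (Fin 2) ℂ) = c • 1 := by
  obtain ⟨ε, hε⟩ := exists_sign_of_mem_signedPermPairs hg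
  have torsionFree : IsAddTorsionFree (Matrix (Fin 2) (Fin 2) ℂ) := .of_module_rat _
  obtain ⟨hi, hj, hk⟩ := semiconjBy_axes_of_semiconjBy_cubeDiagonals hε
  have commute_kM : Commute (g : Matrix (Fin 2) (Fin 2) ℂ) kM := by
    simpa [Commute, iM_mul_jM, smul_smul] using hi.mul_right hj
  have smul_kM : ε • kM = kM :=
    g.isUnit.mul_left_injective (hk.eq.symm.trans commute_kM.eq)
  obtain rfl : ε = 1 := by
    refine (Int.units_eq_one_or ε).resolve_right ?_
    rintro rfl
    have neg_I : -I = I := by simpa [kM, Units.smul_def] using congrFun₂ smul_kM 0 0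
    exact I_ne_zero (neg_eq_self.1 neg_I)
  exact exists_eq_smul_one_of_commute (by simpa [Commute] using hi) commute_kM

end Diagonals

section Octahedral

/-- The pairs of a matrix and the permutation of the four cube diagonals it induces by conjugation,
subject to the determinant being the sign of the permutation. -/
def octahedralPairs : Subgroup (GL (Fin 2) ℂ × Equiv.Perm (Fin 4)) :=
  signedPermPairs diagonals ⊓
    (GeneralLinearGroup.det.comp (MonoidHom.fst _ _)).eqLocus
      ((Units.map (Int.castRingHom ℂ : ℤ →* ℂ)).comp (Equiv.Perm.sign.comp (MonoidHom.snd _ _)))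

theorem mk_mem_octahedralPairs {g : GL (Fin 2) ℂ} {σ : Equiv.Perm (Fin 4)} :
    (g, σ) ∈ octahedralPairs ↔ (g, σ) ∈ signedPermPairs diagonals ∧
      (g : Matrix (Fin 2) (Fin 2) ℂ).det = ((Equiv.Perm.sign σ : ℤ) : ℂ) :=
  and_congr_right fun _ ↦ Units.ext_iff

theorem mk_mem_octahedralPairs_of_eq_iM {g : GL (Fin 2) ℂ}
    (hg : (g : Matrix (Fin 2) (Fin 2) ℂ) = iM) :
    (g, Equiv.swap 0 1 * Equiv.swap 2 3) ∈ octahedralPairs := by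
  refine mk_mem_octahedralPairs.2 ⟨mk_mem_signedPermPairs.2 fun a ↦ ⟨1, ?_⟩, ?_⟩
  · rw [hg, one_smul, diagonals, ← cubeDiagonals_neg_neg]
    exact semiconjBy_cubeDiagonals rfl semiconjBy_iM_jM semiconjBy_iM_kM a
  · simp [hg, det_iM]

theorem mk_mem_octahedralPairs_of_eq_wM {g : GL (Fin 2) ℂ}
    (hg : (g : Matrix (Fin 2) (Fin 2) ℂ) = wM) :
    (g, Equiv.swap 1 2 * Equiv.swap 2 3) ∈ octahedralPairs := by
  refine mk_mem_octahedralPairs.2 ⟨mk_mem_signedPermPairs.2 fun a ↦ ⟨1, ?_⟩, ?_⟩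
  · rw [hg, one_smul, diagonals, ← cubeDiagonals_rotate]
    exact semiconjBy_cubeDiagonals semiconjBy_wM_iM semiconjBy_wM_jM semiconjBy_wM_kM a
  · simp [hg, det_wM]

theorem mk_mem_octahedralPairs_of_eq_dM {g : GL (Fin 2) ℂ}
    (hg : (g : Matrix (Fin 2) (Fin 2) ℂ) = dM) : (g, Equiv.swap 2 3) ∈ octahedralPairs := by
  refine mk_mem_octahedralPairs.2 ⟨mk_mem_signedPermPairs.2 fun a ↦ ⟨-1, ?_⟩, ?_⟩
  · rw [hg, Units.neg_smul, one_smul, diagonals, ← cubeDiagonals_neg_swap]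
    exact semiconjBy_cubeDiagonals semiconjBy_dM_iM semiconjBy_dM_jM semiconjBy_dM_kM a
  · simp [hg, det_dM]

theorem G_le_map_fst_octahedralPairs : G ≤ octahedralPairs.map (MonoidHom.fst _ _) := by
  refine (Subgroup.closure_le _).2 ?_
  rintro g (hg | hg | hg)
  · exact ⟨_, mk_mem_octahedralPairs_of_eq_iM hg, rfl⟩
  · exact ⟨_, mk_mem_octahedralPairs_of_eq_wM hg, rfl⟩
  · exact ⟨_, mk_mem_octahedralPairs_of_eq_dM hg, rfl⟩

theorem eq_one_of_one_mem_octahedralPairs (σ : Equiv.Perm (Fin 4))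
    (hσ : (1, σ) ∈ octahedralPairs) : σ = 1 := by
  ext1 a
  obtain ⟨ε, hε⟩ := (mk_mem_octahedralPairs.1 hσ).1 a
  exact (eq_of_diagonals_eq_smul (by simpa using hε.eq)).symm

theorem mk_one_mem_octahedralPairs_iff {g : GL (Fin 2) ℂ} :
    (g, 1) ∈ octahedralPairs ↔
      (g : Matrix (Fin 2) (Fin 2) ℂ) = 1 ∨ (g : Matrix (Fin 2) (Fin 2) ℂ) = -1 := by
  rw [mk_mem_octahedralPairs, Equiv.Perm.sign_one, Units.val_one, Int.cast_one]
  constructor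
  · rintro ⟨hg, hdet⟩
    obtain ⟨c, hc⟩ := exists_eq_smul_one_of_mem_signedPermPairs hg
    have sq_c : c ^ 2 = 1 := by simpa [hc, det_smul] using hdet
    rw [hc]
    refine (sq_eq_one_iff.1 sq_c).imp ?_ ?_ <;> rintro rfl <;> simp
  · rintro (hg | hg)
    · exact ⟨fun a ↦ ⟨1, by simp [hg]⟩, by simp [hg]⟩
    · exact ⟨fun a ↦ ⟨1, by simp [hg]⟩, by simp [hg, det_neg]⟩

/-- The permutation of the four cube diagonals that an element of `G` induces by conjugation. -/
def diagonalPerm : G →* Equiv.Perm (Fin 4) :=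
  (exists_monoidHom_of_le_map_fst eq_one_of_one_mem_octahedralPairs
    G_le_map_fst_octahedralPairs).choose

theorem mk_diagonalPerm_mem_octahedralPairs (g : G) :
    ((g : GL (Fin 2) ℂ), diagonalPerm g) ∈ octahedralPairs :=
  (exists_monoidHom_of_le_map_fst eq_one_of_one_mem_octahedralPairs
    G_le_map_fst_octahedralPairs).choose_spec g

theorem diagonalPerm_eq_iff {g : G} {σ : Equiv.Perm (Fin 4)} :
    diagonalPerm g = σ ↔ ((g : GL (Fin 2) ℂ), σ) ∈ octahedralPairs := by
  refine ⟨fun h ↦ h ▸ mk_diagonalPerm_mem_octahedralPairs g, fun hσ ↦ ?_⟩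
  refine eq_of_mul_inv_eq_one (eq_one_of_one_mem_octahedralPairs _ ?_)
  simpa using octahedralPairs.mul_mem (mk_diagonalPerm_mem_octahedralPairs g)
    (octahedralPairs.inv_mem hσ)

theorem mem_ker_diagonalPerm_iff {g : G} :
    g ∈ diagonalPerm.ker ↔ ((g : GL (Fin 2) ℂ) : Matrix (Fin 2) (Fin 2) ℂ) = 1 ∨
      ((g : GL (Fin 2) ℂ) : Matrix (Fin 2) (Fin 2) ℂ) = -1 := by
  rw [MonoidHom.mem_ker, diagonalPerm_eq_iff, mk_one_mem_octahedralPairs_iff]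

theorem diagonalPerm_surjective : Function.Surjective diagonalPerm := by
  have hI : Equiv.swap 0 1 * Equiv.swap 2 3 ∈ diagonalPerm.range :=
    ⟨⟨GeneralLinearGroup.mkOfDetNeZero iM (by simp [det_iM]),
      Subgroup.subset_closure (.inl rfl)⟩,
      diagonalPerm_eq_iff.2 (mk_mem_octahedralPairs_of_eq_iM rfl)⟩
  have hW : Equiv.swap 1 2 * Equiv.swap 2 3 ∈ diagonalPerm.range :=
    ⟨⟨GeneralLinearGroup.mkOfDetNeZero wM (by simp [det_wM]),
      Subgroup.subset_closure (.inr (.inl rfl))⟩,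
      diagonalPerm_eq_iff.2 (mk_mem_octahedralPairs_of_eq_wM rfl)⟩
  have hD : Equiv.swap 2 3 ∈ diagonalPerm.range :=
    ⟨⟨GeneralLinearGroup.mkOfDetNeZero dM (by simp [det_dM]),
      Subgroup.subset_closure (.inr (.inr rfl))⟩,
      diagonalPerm_eq_iff.2 (mk_mem_octahedralPairs_of_eq_dM rfl)⟩
  have hswap : Equiv.swap 0 1 ∈ diagonalPerm.range := by
    simpa [mul_assoc] using mul_mem hI hD
  have hrotate : finRotate 4 ∈ diagonalPerm.range := by
    convert mul_mem hswap hW using 1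
    decide
  rw [← MonoidHom.range_eq_top, eq_top_iff, ← closure_finRotate_swap_zero_one 2,
    Subgroup.closure_le]
  exact Set.insert_subset hrotate (Set.singleton_subset_iff.2 hswap)

theorem center_G_eq_ker_diagonalPerm : Subgroup.center G = diagonalPerm.ker := by
  refine le_antisymm (center_le_ker_of_surjective diagonalPerm_surjective
    (center_perm_eq_bot (by norm_num))) fun g hg ↦ Subgroup.mem_center_iff.2 fun x ↦ ?_
  refine Subtype.ext (Units.ext ?_)
  rw [Subgroup.coe_mul, Subgroup.coe_mul, Units.val_mul, Units.val_mul]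
  obtain h | h := mem_ker_diagonalPerm_iff.1 hg <;> simp [h]

end Octahedral

theorem center_and_quotient :
    (∀ g : G, g ∈ Subgroup.center G ↔
      ((g : GL (Fin 2) ℂ) : Matrix (Fin 2) (Fin 2) ℂ) = 1 ∨
      ((g : GL (Fin 2) ℂ) : Matrix (Fin 2) (Fin 2) ℂ) = -1) ∧
    Nonempty ((G ⧸ Subgroup.center G) ≃* Equiv.Perm (Fin 4)) := by
  constructor
  · intro g
    rw [center_G_eq_ker_diagonalPerm, mem_ker_diagonalPerm_iff]
  · exact ⟨(QuotientGroup.quotientMulEquivOfEq center_G_eq_ker_diagonalPerm).trans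
      (QuotientGroup.quotientKerEquivOfSurjective diagonalPerm diagonalPerm_surjective)⟩
end
end

section
/- The subgroup B of GL(2,ℂ) generated by {i, w, c} has order 48, every element of B is unitary with determinant 1 (so B is contained in SU(2)), the unique element of order 2 in B is -1 (the negative of the identity matrix), and B is not isomorphic as a group to G. Thus the two double covers of the octahedral group are non-isomorphic groups of order 48. -/
open Matrix Complex
open scoped MatrixGroups

noncomputable section

def B : Subgroup (GL (Fin 2) ℂ) :=
  Subgroup.closure {g : GL (Fin 2) ℂ |
    (g : Matrix (Fin 2) (Fin 2) ℂ) = iM ∨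
    (g : Matrix (Fin 2) (Fin 2) ℂ) = wM ∨
    (g : Matrix (Fin 2) (Fin 2) ℂ) = cM}

/-!
`GL(2, ℂ)` contains the unit quaternions, embedded as `SU(2)`, and `B` is the image of the group of
quaternions generated by `i`, `w` and `c`. Starting from the cyclic group `⟨i⟩` of order 4,
adjoining `j`, `w` and `c` one after the other multiplies the order by 2, 3 and 2: each new element
normalizes the group built so far, and its square, cube and square, respectively, is the first power
lying in that group. Hence `B` has order `4 · 2 · 3 · 2 = 48`. Since the quaternions form a division
ring, `-1` is the only involution of `B`, whereas `G` contains the two involutions `i² = -1` and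
`d`.
-/

section GroupTheory

open Subgroup

variable {Γ : Type*} [Group Γ]

lemma conj_eq_inv_iff {c x : Γ} : c * x * c⁻¹ = x⁻¹ ↔ x * c * x = c := by
  rw [mul_inv_eq_iff_eq_mul, eq_inv_mul_iff_mul_eq, ← mul_assoc]

lemma relIndex_zpowers_eq_prime {N : Subgroup Γ} {x : Γ} {p : ℕ} (hp : p.Prime)
    (hpow : x ^ p ∈ N) (hx : x ∉ N) : N.relIndex (zpowers x) = p := by
  let q : zpowers x →* zpowers x ⧸ N.subgroupOf (zpowers x) := QuotientGroup.mk' _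
  let y : zpowers x := ⟨x, mem_zpowers x⟩
  have orderOf_q_y : orderOf (q y) = p := by
    have := Fact.mk hp
    refine orderOf_eq_prime ?_ fun h ↦ hx ?_
    · exact (map_pow q y p).symm.trans ((QuotientGroup.eq_one_iff _).2 (mem_subgroupOf.2 hpow))
    · exact mem_subgroupOf.1 ((QuotientGroup.eq_one_iff _).1 h)
  have mem_zpowers_q_y : ∀ z, z ∈ zpowers (q y) := by
    intro z
    obtain ⟨⟨_, n, rfl⟩, rfl⟩ := QuotientGroup.mk'_surjective _ z
    exact ⟨n, (map_zpow q y n).symm⟩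
  exact (orderOf_eq_card_of_forall_mem_zpowers mem_zpowers_q_y).symm.trans orderOf_q_y

lemma relIndex_sup_of_le_normalizer {H N : Subgroup Γ} (h : H ≤ normalizer N) :
    N.relIndex (H ⊔ N) = N.relIndex H :=
  have := normal_subgroupOf_of_le_normalizer h
  have := normal_subgroupOf_sup_of_le_normalizer h
  Nat.card_congr (QuotientGroup.quotientInfEquivProdNormalizerQuotient H N h).toEquiv.symm

lemma mem_normalizer_closure_of_conj_mem {S : Set Γ} [Finite (closure S)] {x : Γ}
    (h : ∀ s ∈ S, x * s * x⁻¹ ∈ closure S) : x ∈ normalizer (closure S : Set Γ) := by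
  have closure_le_comap_conj : closure S ≤ (closure S).comap (MulAut.conj x).toMonoidHom :=
    (closure_le _).2 h
  exact mem_normalizer_fintype fun _ hn ↦ closure_le_comap_conj hn

lemma card_closure_insert {S : Set Γ} [Finite (closure S)] {x : Γ} {p : ℕ} (hp : p.Prime)
    (hconj : ∀ s ∈ S, x * s * x⁻¹ ∈ closure S) (hpow : x ^ p ∈ closure S)
    (hx : x ∉ closure S) : Nat.card (closure (insert x S)) = Nat.card (closure S) * p := by
  have closure_eq : closure (insert x S) = zpowers x ⊔ closure S := by
    rw [Set.insert_eq, Subgroup.closure_union, zpowers_eq_closure]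
  have zpowers_le_normalizer : zpowers x ≤ normalizer (closure S : Set Γ) :=
    zpowers_le.2 (mem_normalizer_closure_of_conj_mem hconj)
  calc Nat.card (closure (insert x S))
      = Nat.card (closure S) * (closure S).relIndex (zpowers x ⊔ closure S) := by
        rw [closure_eq, ← relIndex_bot_left, ← relIndex_bot_left,
          relIndex_mul_relIndex _ _ _ bot_le le_sup_right]
    _ = Nat.card (closure S) * p := by
        rw [relIndex_sup_of_le_normalizer zpowers_le_normalizer,
          relIndex_zpowers_eq_prime hp hpow hx]

lemma isEmpty_mulEquiv_of_orderOf_eq {Δ : Type*} [Group Δ] {n : ℕ}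
    (h : ∀ x y : Γ, orderOf x = n → orderOf y = n → x = y) {u v : Δ} (hu : orderOf u = n)
    (hv : orderOf v = n) (huv : u ≠ v) : IsEmpty (Γ ≃* Δ) := by
  refine ⟨fun f ↦ huv (f.symm.injective (h _ _ ?_ ?_))⟩
  · rw [f.symm.orderOf_eq, hu]
  · rw [f.symm.orderOf_eq, hv]

/-- The relations between the units `i` and `j` of the Hamilton quaternions; two elements of a group
that satisfy them generate a quaternion group of order 8. -/
structure IsQuaternionPair (i j : Γ) : Prop where
  sq_right : j ^ 2 = i ^ 2
  conj_left : j * i * j⁻¹ = i⁻¹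
  sq_ne_one : i ^ 2 ≠ 1

namespace IsQuaternionPair

variable {i j : Γ} (h : IsQuaternionPair i j)
include h

lemma pow_four : i ^ 4 = 1 := by
  have sq_eq_inv_sq : i ^ 2 = (i ^ 2)⁻¹ :=
    calc i ^ 2 = j * j ^ 2 * j⁻¹ := by rw [h.sq_right.symm]; group
      _ = (j * i * j⁻¹) ^ 2 := by rw [h.sq_right, conj_pow]
      _ = (i ^ 2)⁻¹ := by rw [h.conj_left, inv_pow]
  calc i ^ 4 = i ^ 2 * i ^ 2 := by rw [← pow_add]
    _ = 1 := mul_eq_one_iff_eq_inv.2 sq_eq_inv_sq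

lemma orderOf_left : orderOf i = 4 :=
  orderOf_eq_prime_pow (p := 2) (n := 1) h.sq_ne_one h.pow_four

lemma not_commute : ¬ Commute i j := by
  intro hij
  have i_eq_inv : i = i⁻¹ := by rw [← h.conj_left, ← hij.eq, mul_inv_cancel_right]
  exact h.sq_ne_one (by rw [sq, mul_eq_one_iff_eq_inv, ← i_eq_inv])

protected lemma symm : IsQuaternionPair j i where
  sq_right := h.sq_right.symm
  conj_left := by
    have hij : i * j * i = j := conj_eq_inv_iff.1 h.conj_left
    have hji : j * i * j = i := by
      calc j * i * j = i * j * (i ^ 2) * j := by rw [sq, ← mul_assoc (i * j), hij]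
        _ = i * j ^ 4 := by rw [← h.sq_right]; group
        _ = i := by rw [pow_mul j 2 2, h.sq_right, ← pow_mul, h.pow_four, mul_one]
    exact conj_eq_inv_iff.2 hji
  sq_ne_one := h.sq_right ▸ h.sq_ne_one

lemma card_closure : Nat.card (closure {j, i}) = 8 := by
  have card_closure_i : Nat.card (closure {i}) = 4 := by
    rw [← zpowers_eq_closure, Nat.card_zpowers, h.orderOf_left]
  have := Nat.finite_of_card_ne_zero (card_closure_i.trans_ne (by norm_num))
  have i_mem : i ∈ closure {i} := subset_closure rfl
  rw [card_closure_insert Nat.prime_two, card_closure_i]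
  · rintro _ rfl
    exact h.conj_left ▸ inv_mem i_mem
  · exact h.sq_right ▸ pow_mem i_mem 2
  · intro j_mem
    obtain ⟨n, rfl⟩ := mem_closure_singleton.1 j_mem
    exact h.not_commute (Commute.self_zpow i n)

lemma conj_mem_zpowers {g : Γ} (hg : g ∈ closure {j, i}) : g * j * g⁻¹ ∈ zpowers j := by
  have closure_le_normalizer : closure {j, i} ≤ normalizer (zpowers j : Set Γ) := by
    have finite_zpowers : Finite (closure {j}) := by
      apply Nat.finite_of_card_ne_zero
      rw [← zpowers_eq_closure, Nat.card_zpowers, h.symm.orderOf_left]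
      norm_num
    have j_mem : j ∈ closure {j} := subset_closure rfl
    rw [closure_le, zpowers_eq_closure]
    rintro x (rfl | rfl) <;> refine mem_normalizer_closure_of_conj_mem ?_ <;> rintro _ rfl
    · rwa [mul_inv_cancel_right]
    · exact h.symm.conj_left ▸ inv_mem j_mem
  exact (mem_normalizer_iff.1 (closure_le_normalizer hg) j).1 (mem_zpowers j)

end IsQuaternionPair

/-- The relations between `i`, `j` and the Hurwitz unit `w = (-1 + i + j + k) / 2`; three elements
of a group that satisfy them generate a binary tetrahedral group. -/
structure IsBinaryTetrahedralTriple (i j w : Γ) : Prop extends IsQuaternionPair i j where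
  pow_three : w ^ 3 = 1
  conj_w_i : w * i * w⁻¹ = i * j
  conj_w_j : w * j * w⁻¹ = i

namespace IsBinaryTetrahedralTriple

variable {i j w : Γ} (h : IsBinaryTetrahedralTriple i j w)
include h

lemma w_notMem_closure : w ∉ closure {j, i} := by
  intro hw
  have pow_eight : w ^ 8 = 1 :=
    orderOf_dvd_iff_pow_eq_one.1 (h.card_closure ▸ Subgroup.orderOf_dvd_natCard _ hw)
  have w_eq_one : w = 1 := by
    calc w = (w ^ 3) ^ 3 * (w ^ 8)⁻¹ := by group
      _ = 1 := by rw [h.pow_three, pow_eight, one_pow, inv_one, one_mul]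
  have j_eq_i : j = i := by simpa [w_eq_one] using h.conj_w_j
  exact h.not_commute (j_eq_i ▸ Commute.refl i)

lemma card_closure : Nat.card (closure {w, j, i}) = 24 := by
  have card_eq := h.toIsQuaternionPair.card_closure
  have := Nat.finite_of_card_ne_zero (card_eq.trans_ne (by norm_num))
  have i_mem : i ∈ closure {j, i} := subset_closure (by simp)
  have j_mem : j ∈ closure {j, i} := subset_closure (by simp)
  rw [card_closure_insert Nat.prime_three _ _ h.w_notMem_closure, card_eq]
  · rintro _ (rfl | rfl)
    · exact h.conj_w_j ▸ i_mem
    · exact h.conj_w_i ▸ mul_mem i_mem j_mem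
  · exact h.pow_three ▸ one_mem _

end IsBinaryTetrahedralTriple

/-- The relations between `i`, `j`, `w` and `c = (j - k) / √2`; four elements of a group that
satisfy them generate a binary octahedral group. -/
structure IsBinaryOctahedralQuadruple (i j w c : Γ) : Prop
    extends IsBinaryTetrahedralTriple i j w where
  sq_c : c ^ 2 = i ^ 2
  conj_c_i : c * i * c⁻¹ = i⁻¹
  conj_c_j : c * j * c⁻¹ = j * i
  conj_c_w : c * w * c⁻¹ = w⁻¹

namespace IsBinaryOctahedralQuadruple

variable {i j w c : Γ} (h : IsBinaryOctahedralQuadruple i j w c)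
include h

lemma c_notMem_closure_quaternion : c ∉ closure {j, i} := by
  intro hc
  obtain ⟨n, hn⟩ := mem_zpowers_iff.1 (h.conj_c_j ▸ h.conj_mem_zpowers hc)
  have j_commute_ji : j * (j * i) = j * i * j := hn ▸ Commute.self_zpow j n
  exact h.not_commute (mul_left_cancel (j_commute_ji.trans (mul_assoc j i j))).symm

lemma card_closure_quaternion_insert : Nat.card (closure {c, j, i}) = 16 := by
  have card_eq := h.toIsQuaternionPair.card_closure
  have := Nat.finite_of_card_ne_zero (card_eq.trans_ne (by norm_num))
  have i_mem : i ∈ closure {j, i} := subset_closure (by simp)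
  have j_mem : j ∈ closure {j, i} := subset_closure (by simp)
  rw [card_closure_insert Nat.prime_two _ _ h.c_notMem_closure_quaternion, card_eq]
  · rintro _ (rfl | rfl)
    · exact h.conj_c_j ▸ mul_mem j_mem i_mem
    · exact h.conj_c_i ▸ inv_mem i_mem
  · exact h.sq_c ▸ pow_mem i_mem 2

lemma c_notMem_closure_tetrahedral : c ∉ closure {w, j, i} := by
  intro hc
  have closure_le : closure {c, j, i} ≤ closure {w, j, i} := by
    rw [Subgroup.closure_le, Set.insert_subset_iff]
    exact ⟨hc, (Set.subset_insert w _).trans subset_closure⟩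
  have card_dvd := Subgroup.card_dvd_of_le closure_le
  rw [h.card_closure_quaternion_insert, h.toIsBinaryTetrahedralTriple.card_closure] at card_dvd
  norm_num at card_dvd

lemma card_closure : Nat.card (closure {c, w, j, i}) = 48 := by
  have card_eq := h.toIsBinaryTetrahedralTriple.card_closure
  have := Nat.finite_of_card_ne_zero (card_eq.trans_ne (by norm_num))
  have i_mem : i ∈ closure {w, j, i} := subset_closure (by simp)
  have j_mem : j ∈ closure {w, j, i} := subset_closure (by simp)
  have w_mem : w ∈ closure {w, j, i} := subset_closure (by simp)
  rw [card_closure_insert Nat.prime_two _ _ h.c_notMem_closure_tetrahedral, card_eq]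
  · rintro _ (rfl | rfl | rfl)
    · exact h.conj_c_w ▸ inv_mem w_mem
    · exact h.conj_c_j ▸ mul_mem j_mem i_mem
    · exact h.conj_c_i ▸ inv_mem i_mem
  · exact h.sq_c ▸ pow_mem i_mem 2

lemma closure_eq : closure {i, w, c} = closure {c, w, j, i} := by
  have j_mem : j ∈ closure {i, w, c} := by
    have i_mem : i ∈ closure {i, w, c} := subset_closure (by simp)
    have w_mem : w ∈ closure {i, w, c} := subset_closure (by simp)
    have j_eq : j = w⁻¹ * i * w := by rw [← h.conj_w_j]; group
    exact j_eq ▸ mul_mem (mul_mem (inv_mem w_mem) i_mem) w_mem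
  refine le_antisymm (closure_mono (by grind)) ((closure_le _).2 ?_)
  rintro _ (rfl | rfl | rfl | rfl)
  exacts [subset_closure (by simp), subset_closure (by simp), j_mem, subset_closure (by simp)]

end IsBinaryOctahedralQuadruple

end GroupTheory

section Quaternions

open Quaternion

lemma mem_unitary_of_normSq_eq_one {q : ℍ[ℝ]} (hq : normSq q = 1) : q ∈ unitary ℍ[ℝ] := by
  rw [Unitary.mem_iff, star_mul_self, self_mul_star, hq]
  exact ⟨coe_one, coe_one⟩

/-- The unit quaternion `a + b i + c j + d k`. -/
def unitQuaternion (a b c d : ℝ) (h : a ^ 2 + b ^ 2 + c ^ 2 + d ^ 2 = 1) : unitary ℍ[ℝ] :=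
  ⟨⟨a, b, c, d⟩, mem_unitary_of_normSq_eq_one ((normSq_def' _).trans h)⟩

namespace unitQuaternion

variable {a b c d : ℝ} (h : a ^ 2 + b ^ 2 + c ^ 2 + d ^ 2 = 1)

@[simp] lemma re_coe : (unitQuaternion a b c d h : ℍ[ℝ]).re = a := rfl

@[simp] lemma imI_coe : (unitQuaternion a b c d h : ℍ[ℝ]).imI = b := rfl

@[simp] lemma imJ_coe : (unitQuaternion a b c d h : ℍ[ℝ]).imJ = c := rfl

@[simp] lemma imK_coe : (unitQuaternion a b c d h : ℍ[ℝ]).imK = d := rfl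

end unitQuaternion

/-- The quaternion unit `i`. -/
def quatI : unitary ℍ[ℝ] := unitQuaternion 0 1 0 0 (by norm_num)

/-- The quaternion unit `j`. -/
def quatJ : unitary ℍ[ℝ] := unitQuaternion 0 0 1 0 (by norm_num)

/-- The Hurwitz unit `w = (-1 + i + j + k) / 2`. -/
def quatW : unitary ℍ[ℝ] := unitQuaternion (-1 / 2) (1 / 2) (1 / 2) (1 / 2) (by norm_num)

/-- The unit quaternion `c = (j - k) / √2`. -/
def quatC : unitary ℍ[ℝ] := unitQuaternion 0 0 (√2)⁻¹ (-(√2)⁻¹) (by norm_num)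

lemma quatI_sq : quatI ^ 2 = -1 := by
  ext <;> simp [quatI, sq, Unitary.coe_neg]

lemma neg_one_ne_one_unitQuaternion : (-1 : unitary ℍ[ℝ]) ≠ 1 := by
  intro h
  have re_eq := congrArg (fun q : unitary ℍ[ℝ] ↦ (q : ℍ[ℝ]).re) h
  norm_num [Unitary.coe_neg] at re_eq

lemma isBinaryOctahedralQuadruple_quat :
    IsBinaryOctahedralQuadruple quatI quatJ quatW quatC where
  sq_right := by ext <;> simp [quatI, quatJ, sq]
  conj_left := by
    rw [conj_eq_inv_iff]
    ext <;> simp [quatI, quatJ]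
  sq_ne_one := quatI_sq ▸ neg_one_ne_one_unitQuaternion
  pow_three := by ext <;> simp [quatW, pow_succ] <;> norm_num
  conj_w_i := by
    rw [mul_inv_eq_iff_eq_mul]
    ext <;> norm_num [quatI, quatJ, quatW]
  conj_w_j := by
    rw [mul_inv_eq_iff_eq_mul]
    ext <;> norm_num [quatI, quatJ, quatW]
  sq_c := by ext <;> simp [quatI, quatC, sq, ← mul_inv]; norm_num
  conj_c_i := by
    rw [conj_eq_inv_iff]
    ext <;> simp [quatI, quatC]
  conj_c_j := by
    rw [mul_inv_eq_iff_eq_mul]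
    ext <;> simp [quatI, quatJ, quatC]
  conj_c_w := by
    rw [conj_eq_inv_iff]
    ext <;> simp [quatC, quatW] <;> ring

/-- The binary octahedral group, as a group of unit quaternions. -/
def binaryOctahedralGroup : Subgroup (unitary ℍ[ℝ]) :=
  Subgroup.closure {quatI, quatW, quatC}

lemma card_binaryOctahedralGroup : Nat.card binaryOctahedralGroup = 48 := by
  rw [binaryOctahedralGroup, isBinaryOctahedralQuadruple_quat.closure_eq,
    isBinaryOctahedralQuadruple_quat.card_closure]

lemma neg_one_mem_binaryOctahedralGroup : -1 ∈ binaryOctahedralGroup :=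
  quatI_sq ▸ pow_mem (Subgroup.subset_closure (by simp)) 2

/-- The matrices `iM`, `jM`, `kM` span a copy of the Hamilton quaternions. -/
def pauliBasis : QuaternionAlgebra.Basis (Matrix (Fin 2) (Fin 2) ℂ) (-1 : ℝ) 0 (-1) where
  i := iM
  j := jM
  k := kM
  i_mul_i := by ext m n; fin_cases m <;> fin_cases n <;> simp [iM]
  j_mul_j := by ext m n; fin_cases m <;> fin_cases n <;> simp [jM]
  i_mul_j := by ext m n; fin_cases m <;> fin_cases n <;> simp [iM, jM, kM]
  j_mul_i := by ext m n; fin_cases m <;> fin_cases n <;> simp [iM, jM, kM]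

/-- The embedding of the quaternions into the complex `2 × 2` matrices. -/
def quaternionToMatrix : ℍ[ℝ] →ₐ[ℝ] Matrix (Fin 2) (Fin 2) ℂ :=
  pauliBasis.liftHom

lemma quaternionToMatrix_apply (q : ℍ[ℝ]) :
    quaternionToMatrix q =
      !![q.re + q.imK * I, q.imI + q.imJ * I; -q.imI + q.imJ * I, q.re - q.imK * I] := by
  change pauliBasis.lift q = _
  ext m n
  fin_cases m <;> fin_cases n <;>
    simp [QuaternionAlgebra.Basis.lift, pauliBasis, iM, jM, kM,
      Matrix.algebraMap_matrix_apply, sub_eq_add_neg]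

lemma quaternionToMatrix_injective : Function.Injective quaternionToMatrix :=
  quaternionToMatrix.toRingHom.injective

lemma quaternionToMatrix_star (q : ℍ[ℝ]) :
    quaternionToMatrix (star q) = star (quaternionToMatrix q) := by
  rw [quaternionToMatrix_apply, quaternionToMatrix_apply]
  ext m n
  fin_cases m <;> fin_cases n <;> simp [star_apply, sub_eq_add_neg]

lemma det_quaternionToMatrix (q : ℍ[ℝ]) : (quaternionToMatrix q).det = normSq q := by
  rw [quaternionToMatrix_apply, det_fin_two_of, normSq_def']
  push_cast
  linear_combination -(q.imJ ^ 2 + q.imK ^ 2 : ℂ) * I_sq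

lemma quaternionToMatrix_mem_specialUnitaryGroup {q : ℍ[ℝ]} (hq : q ∈ unitary ℍ[ℝ]) :
    quaternionToMatrix q ∈ specialUnitaryGroup (Fin 2) ℂ := by
  have mul_star_eq_one : q * star q = 1 := (Unitary.mem_iff.1 hq).2
  have normSq_eq_one : normSq q = 1 := by
    rw [self_mul_star] at mul_star_eq_one
    exact coe_injective mul_star_eq_one
  rw [mem_specialUnitaryGroup_iff, mem_unitaryGroup_iff, ← quaternionToMatrix_star, ← map_mul,
    mul_star_eq_one, map_one, det_quaternionToMatrix, normSq_eq_one]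
  exact ⟨rfl, ofReal_one⟩

/-- The embedding of the unit quaternions into `GL(2, ℂ)`. -/
def unitQuaternionToGL : unitary ℍ[ℝ] →* GL (Fin 2) ℂ :=
  (Units.map quaternionToMatrix).comp Unitary.toUnits

lemma coe_unitQuaternionToGL (q : unitary ℍ[ℝ]) :
    (unitQuaternionToGL q : Matrix (Fin 2) (Fin 2) ℂ) = quaternionToMatrix q :=
  rfl

lemma unitQuaternionToGL_injective : Function.Injective unitQuaternionToGL := fun _ _ h ↦
  Subtype.ext (quaternionToMatrix_injective (congrArg Units.val h))

lemma unitQuaternionToGL_neg_one : unitQuaternionToGL (-1) = -1 :=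
  Units.ext (by simp [coe_unitQuaternionToGL, Unitary.coe_neg])

lemma coe_unitQuaternionToGL_quatI :
    (unitQuaternionToGL quatI : Matrix (Fin 2) (Fin 2) ℂ) = iM := by
  simp [coe_unitQuaternionToGL, quaternionToMatrix_apply, quatI, iM]

lemma coe_unitQuaternionToGL_quatW :
    (unitQuaternionToGL quatW : Matrix (Fin 2) (Fin 2) ℂ) = wM := by
  rw [coe_unitQuaternionToGL, quaternionToMatrix_apply]
  ext m n
  fin_cases m <;> fin_cases n <;> simp [quatW, wM] <;> ring

lemma coe_unitQuaternionToGL_quatC :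
    (unitQuaternionToGL quatC : Matrix (Fin 2) (Fin 2) ℂ) = cM := by
  rw [coe_unitQuaternionToGL, quaternionToMatrix_apply]
  ext m n
  fin_cases m <;> fin_cases n <;> simp [quatC, cM]

lemma map_binaryOctahedralGroup : binaryOctahedralGroup.map unitQuaternionToGL = B := by
  rw [binaryOctahedralGroup, B, MonoidHom.map_closure]
  congr 1
  ext g
  simp only [← coe_unitQuaternionToGL_quatI, ← coe_unitQuaternionToGL_quatW,
    ← coe_unitQuaternionToGL_quatC, Units.val_inj, Set.image_insert_eq, Set.image_singleton,
    Set.mem_insert_iff, Set.mem_singleton_iff, Set.mem_ofPred_eq]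

lemma exists_unitQuaternionToGL_eq {g : GL (Fin 2) ℂ} (hg : g ∈ B) :
    ∃ q, unitQuaternionToGL q = g := by
  rw [← map_binaryOctahedralGroup] at hg
  obtain ⟨q, -, rfl⟩ := hg
  exact ⟨q, rfl⟩

lemma orderOf_unitQuaternionToGL_eq_two_iff {q : unitary ℍ[ℝ]} :
    orderOf (unitQuaternionToGL q) = 2 ↔
      (unitQuaternionToGL q : Matrix (Fin 2) (Fin 2) ℂ) = -1 := by
  have : CharZero ℍ[ℝ] := charZero_of_injective_algebraMap (algebraMap ℝ ℍ[ℝ]).injective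
  rw [orderOf_injective _ unitQuaternionToGL_injective,
    ← orderOf_injective (unitary ℍ[ℝ]).subtype Subtype.coe_injective q,
    CharP.orderOf_eq_two_iff 0 (by norm_num),
    Submonoid.coe_subtype, coe_unitQuaternionToGL,
    ← quaternionToMatrix_injective.eq_iff, map_neg, map_one]

lemma card_B : Nat.card B = 48 := by
  rw [← map_binaryOctahedralGroup,
    Subgroup.card_map_of_injective unitQuaternionToGL_injective, card_binaryOctahedralGroup]

lemma coe_mem_specialUnitaryGroup_of_mem_B {g : GL (Fin 2) ℂ} (hg : g ∈ B) :
    (g : Matrix (Fin 2) (Fin 2) ℂ) ∈ specialUnitaryGroup (Fin 2) ℂ := by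
  obtain ⟨q, rfl⟩ := exists_unitQuaternionToGL_eq hg
  exact quaternionToMatrix_mem_specialUnitaryGroup q.2

lemma neg_one_mem_B : -1 ∈ B := by
  rw [← map_binaryOctahedralGroup, ← unitQuaternionToGL_neg_one]
  exact Subgroup.mem_map_of_mem _ neg_one_mem_binaryOctahedralGroup

lemma orderOf_eq_two_iff_of_mem_B {g : GL (Fin 2) ℂ} (hg : g ∈ B) :
    orderOf g = 2 ↔ (g : Matrix (Fin 2) (Fin 2) ℂ) = -1 := by
  obtain ⟨q, rfl⟩ := exists_unitQuaternionToGL_eq hg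
  exact orderOf_unitQuaternionToGL_eq_two_iff

lemma neg_one_mem_G : -1 ∈ G := by
  have quatI_mem : unitQuaternionToGL quatI ∈ G :=
    Subgroup.subset_closure (Or.inl coe_unitQuaternionToGL_quatI)
  rw [← unitQuaternionToGL_neg_one, ← quatI_sq, map_pow]
  exact pow_mem quatI_mem 2

end Quaternions

lemma dM_mul_dM : dM * dM = 1 := by
  have inv_sqrt_two_sq : (√2 : ℂ)⁻¹ * (√2 : ℂ)⁻¹ = 1 / 2 := by
    rw [← mul_inv, ← ofReal_mul, Real.mul_self_sqrt zero_le_two, ofReal_ofNat, one_div]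
  rw [dM, smul_mul_smul_comm, inv_sqrt_two_sq]
  ext m n
  fin_cases m <;> fin_cases n <;> norm_num

/-- The generator `d` of `G`, which is its own inverse. -/
def dG : GL (Fin 2) ℂ := ⟨dM, dM, dM_mul_dM, dM_mul_dM⟩

lemma dG_mem_G : dG ∈ G :=
  Subgroup.subset_closure (Or.inr (Or.inr rfl))

lemma dM_ne_smul_one (s : ℂ) : dM ≠ s • 1 := by
  intro h
  have entry_eq := congrFun₂ h 0 1
  simp [dM] at entry_eq

lemma orderOf_dG : orderOf dG = 2 := by
  refine orderOf_eq_prime (Units.ext ((sq dM).trans dM_mul_dM)) fun h ↦ dM_ne_smul_one 1 ?_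
  exact (congrArg Units.val h).trans (one_smul ℂ _).symm

lemma dG_ne_neg_one : dG ≠ -1 := fun h ↦
  dM_ne_smul_one (-1) ((congrArg Units.val h).trans (neg_one_smul ℂ _).symm)

lemma isEmpty_mulEquiv_B_G : IsEmpty (B ≃* G) := by
  have orderOf_neg_one : orderOf (-1 : GL (Fin 2) ℂ) = 2 :=
    (orderOf_eq_two_iff_of_mem_B neg_one_mem_B).2 rfl
  refine isEmpty_mulEquiv_of_orderOf_eq (fun x y hx hy ↦ ?_) (u := ⟨dG, dG_mem_G⟩)
    (v := ⟨-1, neg_one_mem_G⟩) ((Subgroup.orderOf_mk _ _).trans orderOf_dG)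
    ((Subgroup.orderOf_mk _ _).trans orderOf_neg_one) fun h ↦ dG_ne_neg_one (congrArg Subtype.val h)
  rw [← Subgroup.orderOf_coe, orderOf_eq_two_iff_of_mem_B (SetLike.coe_mem _)] at hx hy
  exact Subtype.ext (Units.ext (hx.trans hy.symm))

theorem two_double_covers_of_octahedral_group :
    Nat.card B = 48 ∧
    (∀ g ∈ B, (g : Matrix (Fin 2) (Fin 2) ℂ) ∈ Matrix.unitaryGroup (Fin 2) ℂ ∧
      (g : Matrix (Fin 2) (Fin 2) ℂ).det = 1) ∧
    (∃ g : B, ((g : GL (Fin 2) ℂ) : Matrix (Fin 2) (Fin 2) ℂ) = -1) ∧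
    (∀ g : B, orderOf g = 2 ↔ ((g : GL (Fin 2) ℂ) : Matrix (Fin 2) (Fin 2) ℂ) = -1) ∧
    IsEmpty (B ≃* G) := by
  refine ⟨card_B, fun g hg ↦ ?_, ⟨⟨-1, neg_one_mem_B⟩, rfl⟩, fun g ↦ ?_, isEmpty_mulEquiv_B_G⟩
  · exact mem_specialUnitaryGroup_iff.1 (coe_mem_specialUnitaryGroup_of_mem_B hg)
  · rw [← Subgroup.orderOf_coe]
    exact orderOf_eq_two_iff_of_mem_B g.2
end
end
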